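/- arXiv:1804.02227 — 2 statements merged into one kernel-verified Lean document; each statement's English description precedes it below -/
import Mathlib

section
/- Let α > −1. There exists a constant C = C(α) > 0 such that for every f in the Dirichlet-type space 𝒟^1_α with Taylor expansion f(z) = ∑_{n=0}^∞ a_n z^n, one has ∑_{n=0}^∞ |a_n| (n+1)^{−(1+α)} ≤ C ‖f‖_{𝒟^1_α}. -/
open MeasureTheory Set Metric Filter Asymptotics
open scoped ENNReal

/-- Normalized area measure on `ℂ`: Lebesgue area divided by `π`,
so that the unit disc has total mass `1`. -/
noncomputable def dA : Measure ℂ := (ENNReal.ofReal Real.pi)⁻¹ • volume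

/-- The (weighted) Bergman norm `‖f‖_{A^p_α} = ((α+1) ∫_𝔻 (1-|z|²)^α |f(z)|^p dA)^{1/p}`,
as an extended real number. -/
noncomputable def bergmanNorm (p α : ℝ) (f : ℂ → ℂ) : ℝ≥0∞ :=
  (ENNReal.ofReal (α + 1) *
    ∫⁻ z in ball (0 : ℂ) 1, ENNReal.ofReal ((1 - ‖z‖ ^ 2) ^ α * ‖f z‖ ^ p) ∂dA) ^ (1 / p)

/-- The Dirichlet-type norm `‖f‖_{𝒟^p_α} = |f(0)| + ‖f′‖_{A^p_α}`. -/
noncomputable def dirichletNorm (p α : ℝ) (f : ℂ → ℂ) : ℝ≥0∞ :=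
  ENNReal.ofReal ‖f 0‖ + bergmanNorm p α (deriv f)

/-- The Hardy `H^1` norm `sup_{0 ≤ r < 1} (2π)⁻¹ ∫_0^{2π} |f(re^{iθ})| dθ`. -/
noncomputable def hardyNorm (f : ℂ → ℂ) : ℝ≥0∞ :=
  ⨆ r ∈ Ico (0 : ℝ) 1,
    (ENNReal.ofReal (2 * Real.pi))⁻¹ *
      ∫⁻ θ in Ioc (0 : ℝ) (2 * Real.pi),
        ENNReal.ofReal ‖f ((r : ℂ) * Complex.exp ((θ : ℂ) * Complex.I))‖

/-- The operator `I_μ f(z) = ∫_{[0,1)} f(t)/(1-tz) dμ(t)`. -/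
noncomputable def Imu (μ : Measure ℝ) (f : ℂ → ℂ) (z : ℂ) : ℂ :=
  ∫ t : ℝ, f (t : ℂ) / (1 - (t : ℂ) * z) ∂μ

/-- The moment of order `n` of `μ`. -/
noncomputable def moment (μ : Measure ℝ) (n : ℕ) : ℝ := ∫ t : ℝ, t ^ n ∂μ

/-- `M_∞(r, f) = sup_{|z| = r} |f(z)|`. -/
noncomputable def Minf (f : ℂ → ℂ) (r : ℝ) : ℝ := ⨆ z ∈ sphere (0 : ℂ) r, ‖f z‖
lemma aux_fps (f : ℂ → ℂ) (a : ℕ → ℂ)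
    (hf : ∀ z ∈ ball (0 : ℂ) 1, HasSum (fun n : ℕ => a n * z ^ n) (f z)) :
    HasFPowerSeriesOnBall f (.ofScalars ℂ a) 0 1 := by
  constructor
  · refine le_of_forall_lt_imp_le_of_dense fun r hr ↦ ?_
    lift r to NNReal using hr.ne_top
    apply FormalMultilinearSeries.le_radius_of_summable
    have h1 : ((r : ℝ) : ℂ) ∈ ball (0 : ℂ) 1 := by simpa using hr
    simpa using (hf _ h1).summable.norm
  · simp
  · intro y hy
    rw [← ENNReal.coe_one, Metric.eball_coe, NNReal.coe_one] at hy
    simpa [mul_comm] using hf y hy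

lemma aux_deriv_coeff (f : ℂ → ℂ) (a : ℕ → ℂ)
    (hf : ∀ z ∈ ball (0 : ℂ) 1, HasSum (fun n : ℕ => a n * z ^ n) (f z))
    (r : ℝ) (hr : 0 < r) (hr1 : r < 1) (hd : DifferentiableOn ℂ f (ball (0 : ℂ) 1)) (n : ℕ) :
    ‖cauchyPowerSeries (deriv f) 0 r n‖ = ((n : ℝ) + 1) * ‖a (n + 1)‖ := by
  have hfa := (aux_fps f a hf).hasFPowerSeriesAt
  have h1 := hfa.eq_formalMultilinearSeries hfa.analyticAt.hasFPowerSeriesAt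
  have hd' : DifferentiableOn ℂ (deriv f) (ball (0 : ℂ) 1) := hd.deriv isOpen_ball
  have h2 := ((hd'.mono (closedBall_subset_ball (x := (0 : ℂ)) (ε₁ := ((⟨r, hr.le⟩ : NNReal) : ℝ))
    (ε₂ := 1) hr1)).hasFPowerSeriesOnBall (by exact_mod_cast hr)).hasFPowerSeriesAt
  have h3 := h2.eq_formalMultilinearSeries h2.analyticAt.hasFPowerSeriesAt
  have h1' := congrArg (fun p => p.coeff (n + 1)) h1
  simp only [FormalMultilinearSeries.coeff_ofScalars] at h1'
  have h3' := congrArg (fun p => ‖p n‖) h3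
  simp only [FormalMultilinearSeries.ofScalars_norm] at h3'
  change ‖cauchyPowerSeries (deriv f) 0 r n‖ = _ at h3'
  rw [h3', h1', iteratedDeriv_succ', norm_div, norm_div, Nat.factorial_succ]
  have : ((n.factorial : ℕ) : ℝ) ≠ 0 := by positivity
  simp only [Complex.norm_natCast]
  push_cast
  field_simp

/-- Angular integral. -/
noncomputable def auxM (g : ℂ → ℂ) (r : ℝ) : ℝ≥0∞ :=
  ∫⁻ θ in Ioo (-Real.pi) Real.pi, ENNReal.ofReal ‖g (Complex.polarCoord.symm (r, θ))‖

lemma aux_polar_meas : Measurable (fun p : ℝ × ℝ => Complex.polarCoord.symm p) := by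
  simp only [Complex.polarCoord_symm_apply]
  fun_prop

lemma aux_M_meas (g : ℂ → ℂ) (hg : Measurable g) : Measurable (auxM g) := by
  unfold auxM
  apply Measurable.lintegral_prod_right
    (f := fun r θ => ENNReal.ofReal ‖g (Complex.polarCoord.symm (r, θ))‖)
  exact ((hg.comp aux_polar_meas).norm).ennreal_ofReal

lemma aux_circ (r θ : ℝ) : Complex.polarCoord.symm (r, θ) = circleMap 0 r θ := by
  simp [Complex.polarCoord_symm_apply, circleMap, Complex.exp_mul_I]

lemma aux_coeff_le (f : ℂ → ℂ) (a : ℕ → ℂ)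
    (hf : ∀ z ∈ ball (0 : ℂ) 1, HasSum (fun n : ℕ => a n * z ^ n) (f z))
    (hd : DifferentiableOn ℂ f (ball (0 : ℂ) 1))
    (r : ℝ) (hr : 0 < r) (hr1 : r < 1) (n : ℕ) :
    ENNReal.ofReal (((n : ℝ) + 1) * ‖a (n + 1)‖ * r ^ n) ≤ auxM (deriv f) r := by
  have h := norm_cauchyPowerSeries_le (deriv f) 0 r n
  rw [aux_deriv_coeff f a hf r hr hr1 hd n] at h
  have hc : Continuous fun θ : ℝ => ‖deriv f (circleMap 0 r θ)‖ := by
    have hd' : ContinuousOn (deriv f) (ball (0 : ℂ) 1) := (hd.deriv isOpen_ball).continuousOn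
    refine (hd'.comp_continuous (continuous_circleMap 0 r) fun θ => ?_).norm
    simp [abs_of_pos hr, hr1]
  have hper : Function.Periodic (fun θ : ℝ => ‖deriv f (circleMap 0 r θ)‖) (2 * Real.pi) :=
    fun θ => by simp only [periodic_circleMap 0 r θ]
  have h2 := hper.intervalIntegral_add_eq 0 (-Real.pi)
  rw [zero_add, show -Real.pi + 2 * Real.pi = Real.pi by ring] at h2
  rw [h2] at h
  have hM : auxM (deriv f) r
      = ENNReal.ofReal (∫ θ in (-Real.pi)..Real.pi, ‖deriv f (circleMap 0 r θ)‖) := by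
    rw [intervalIntegral.integral_of_le (by linarith [Real.pi_pos]), integral_Ioc_eq_integral_Ioo,
      ofReal_integral_eq_lintegral_ofReal]
    · simp only [auxM, aux_circ]
    · exact (hc.integrableOn_Icc).mono_set Ioo_subset_Icc_self
    · exact Eventually.of_forall fun _ => norm_nonneg _
  rw [hM]
  apply ENNReal.ofReal_le_ofReal
  set J := ∫ θ in (-Real.pi)..Real.pi, ‖deriv f (circleMap 0 r θ)‖
  have hJ : 0 ≤ J := intervalIntegral.integral_nonneg (by linarith [Real.pi_pos])
    fun _ _ => norm_nonneg _
  have hpi : (2 * Real.pi)⁻¹ ≤ 1 := inv_le_one_of_one_le₀ (by linarith [Real.pi_gt_three])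
  rw [abs_of_pos hr] at h
  calc _ ≤ ((2 * Real.pi)⁻¹ * J * r⁻¹ ^ n) * r ^ n := by gcongr
    _ = (2 * Real.pi)⁻¹ * J := by
        rw [mul_assoc, ← mul_pow, inv_mul_cancel₀ hr.ne', one_pow, mul_one]
    _ ≤ 1 * J := by gcongr
    _ = J := one_mul _

lemma aux_polar (α : ℝ) (g : ℂ → ℂ) (hg : Measurable g) :
    ∫⁻ r in Ioo (0 : ℝ) 1, ENNReal.ofReal (r * (1 - r ^ 2) ^ α) * auxM g r ≤
      ∫⁻ z in ball (0 : ℂ) 1, ENNReal.ofReal ((1 - ‖z‖ ^ 2) ^ α * ‖g z‖) := by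
  rw [← lintegral_indicator measurableSet_ball, ← Complex.lintegral_comp_polarCoord_symm]
  have hF : Measurable ((ball (0 : ℂ) 1).indicator
      (fun z => ENNReal.ofReal ((1 - ‖z‖ ^ 2) ^ α * ‖g z‖))) := by
    apply Measurable.indicator _ measurableSet_ball
    fun_prop
  rw [show polarCoord.target = Ioi (0 : ℝ) ×ˢ Ioo (-Real.pi) Real.pi from rfl,
    Measure.volume_eq_prod, setLIntegral_prod]
  swap
  · exact (measurable_fst.ennreal_ofReal.smul (hF.comp aux_polar_meas)).aemeasurable
  refine le_trans ?_ (lintegral_mono_set (Ioo_subset_Ioi_self (b := (0 : ℝ)) (a := (1 : ℝ))))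
  refine setLIntegral_mono' measurableSet_Ioo fun r hr => ?_
  rw [auxM, ← lintegral_const_mul]
  swap
  · exact ((hg.comp (aux_polar_meas.comp measurable_prodMk_left)).norm).ennreal_ofReal
  refine lintegral_mono fun θ => le_of_eq ?_
  have hn : ‖circleMap 0 r θ‖ = r := by simp [abs_of_pos hr.1]
  have hmem : circleMap 0 r θ ∈ ball (0 : ℂ) 1 := by simp [abs_of_pos hr.1, hr.2]
  have hp : 0 ≤ (1 - r ^ 2) ^ α := Real.rpow_nonneg (by nlinarith [hr.1, hr.2]) _
  simp only [aux_circ, indicator_of_mem hmem, hn, smul_eq_mul]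
  rw [ENNReal.ofReal_mul hr.1.le, ENNReal.ofReal_mul hp, mul_assoc]

lemma aux_beta (α : ℝ) (hα : -1 < α) (n : ℕ) :
    ENNReal.ofReal ((1 / 2) * 8 ^ (-(α + 2)) * ((n : ℝ) + 1) ^ (-(α + 2))) ≤
      ∫⁻ r in Ioo (0 : ℝ) 1, ENNReal.ofReal (r ^ (2 * n + 1) * (1 - r ^ 2) ^ (α + 1)) := by
  set N : ℝ := (n : ℝ) + 1 with hN
  have hN1 : 1 ≤ N := by simp [hN]
  have hN0 : 0 < N := by linarith
  have h8 : 0 < 8 * N := by linarith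
  have hi : 0 < (8 * N)⁻¹ := by positivity
  have hi1 : (8 * N)⁻¹ ≤ 1 / 8 := by
    rw [inv_le_comm₀ h8 (by norm_num)]; norm_num; exact hN1
  have hNi : N * (8 * N)⁻¹ = 1 / 8 := by field_simp
  have hsub : Ioo (1 - 2 * (8 * N)⁻¹) (1 - (8 * N)⁻¹) ⊆ Ioo (0 : ℝ) 1 := by
    intro x hx; constructor <;> linarith [hx.1, hx.2]
  refine le_trans ?_ (lintegral_mono_set hsub)
  calc ENNReal.ofReal ((1 / 2) * 8 ^ (-(α + 2)) * N ^ (-(α + 2)))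
      = ∫⁻ r in Ioo (1 - 2 * (8 * N)⁻¹) (1 - (8 * N)⁻¹),
          ENNReal.ofReal ((1 / 2) * ((8 * N)⁻¹) ^ (α + 1)) := by
        rw [setLIntegral_const, Real.volume_Ioo, ← ENNReal.ofReal_mul (by positivity)]
        congr 1
        rw [show 1 - (8 * N)⁻¹ - (1 - 2 * (8 * N)⁻¹) = (8 * N)⁻¹ by ring, mul_assoc, mul_assoc,
          ← Real.mul_rpow (by norm_num) hN0.le, Real.rpow_neg h8.le, ← Real.inv_rpow h8.le,
          show α + 2 = (α + 1) + 1 by ring, Real.rpow_add_one hi.ne']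
    _ ≤ _ := by
        refine setLIntegral_mono' measurableSet_Ioo fun r hr => ENNReal.ofReal_le_ofReal ?_
        have hr0 := (hsub hr).1
        have hr1 := (hsub hr).2
        have hb := one_add_mul_le_pow (a := r - 1) (by linarith) (2 * n + 1)
        have hpow : 1 / 2 ≤ r ^ (2 * n + 1) := by
          rw [show 1 + (r - 1) = r by ring] at hb
          refine le_trans ?_ hb
          have hn : (n : ℝ) = N - 1 := by rw [hN]; ring
          push_cast
          rw [hn]
          nlinarith [hr.1]
        have h2 : (8 * N)⁻¹ ≤ 1 - r ^ 2 := by nlinarith [hr.2]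
        gcongr
        linarith

lemma aux_geom (α : ℝ) (r : ℝ) (hr : r ∈ Ioo (0 : ℝ) 1) :
    ∑' n : ℕ, ENNReal.ofReal (r ^ (n + 1) * (1 - r ^ 2) ^ (α + 1)) ≤
      2 * ENNReal.ofReal (r * (1 - r ^ 2) ^ α) := by
  have hq : 0 < 1 - r ^ 2 := by nlinarith [hr.1, hr.2]
  have hs : HasSum (fun n : ℕ => r ^ (n + 1) * (1 - r ^ 2) ^ (α + 1))
      ((1 - r)⁻¹ * (r * (1 - r ^ 2) ^ (α + 1))) := by
    have := (hasSum_geometric_of_lt_one hr.1.le hr.2).mul_right (r * (1 - r ^ 2) ^ (α + 1))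
    convert! this using 2
    ring
  have hr0 := hr.1
  rw [← ENNReal.ofReal_tsum_of_nonneg (fun n => by positivity) hs.summable, hs.tsum_eq,
    show (2 : ℝ≥0∞) = ENNReal.ofReal 2 by simp, ← ENNReal.ofReal_mul (by norm_num)]
  apply ENNReal.ofReal_le_ofReal
  have h1r : (1 - r) ≠ 0 := by linarith [hr.2]
  have hP : 0 < (1 - r ^ 2) ^ α := by positivity
  rw [Real.rpow_add_one hq.ne']
  have : (1 - r)⁻¹ * (r * ((1 - r ^ 2) ^ α * (1 - r ^ 2))) = (1 + r) * (r * (1 - r ^ 2) ^ α) := by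
    field_simp
    ring
  rw [this]
  have : 0 < r * (1 - r ^ 2) ^ α := by positivity
  nlinarith [hr.2]

lemma aux_main (α : ℝ) (hα : -1 < α) (f : ℂ → ℂ) (a : ℕ → ℂ)
    (hf : ∀ z ∈ ball (0 : ℂ) 1, HasSum (fun n : ℕ => a n * z ^ n) (f z))
    (hd : DifferentiableOn ℂ f (ball (0 : ℂ) 1)) :
    ENNReal.ofReal ((1 / 2) * 8 ^ (-(α + 2))) *
      ∑' n : ℕ, ENNReal.ofReal (‖a (n + 1)‖ * ((n : ℝ) + 1) ^ (-(1 + α))) ≤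
    2 * ∫⁻ z in ball (0 : ℂ) 1, ENNReal.ofReal ((1 - ‖z‖ ^ 2) ^ α * ‖deriv f z‖) := by
  have hg : Measurable (deriv f) := measurable_deriv f
  have hM := aux_M_meas _ hg
  rw [← ENNReal.tsum_mul_left]
  calc _ ≤ ∑' n : ℕ, ∫⁻ r in Ioo (0 : ℝ) 1,
        ENNReal.ofReal (r ^ (n + 1) * (1 - r ^ 2) ^ (α + 1)) * auxM (deriv f) r := by
        refine ENNReal.tsum_le_tsum fun n => ?_
        have hn : (0 : ℝ) < (n : ℝ) + 1 := by positivity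
        calc _ = ENNReal.ofReal (((n : ℝ) + 1) * ‖a (n + 1)‖) *
              ENNReal.ofReal ((1 / 2) * 8 ^ (-(α + 2)) * ((n : ℝ) + 1) ^ (-(α + 2))) := by
              rw [← ENNReal.ofReal_mul (by positivity), ← ENNReal.ofReal_mul (by positivity)]
              congr 1
              rw [show -(1 + α) = -(α + 2) + 1 by ring, Real.rpow_add_one hn.ne']
              ring
          _ ≤ _ := mul_le_mul_right (aux_beta α hα n) _
          _ = ∫⁻ r in Ioo (0 : ℝ) 1, ENNReal.ofReal (((n : ℝ) + 1) * ‖a (n + 1)‖) *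
                ENNReal.ofReal (r ^ (2 * n + 1) * (1 - r ^ 2) ^ (α + 1)) := by
              rw [lintegral_const_mul]
              fun_prop
          _ ≤ _ := by
              refine setLIntegral_mono' measurableSet_Ioo fun r hr => ?_
              have hr0 := hr.1
              have hq : 0 < 1 - r ^ 2 := by nlinarith [hr.1, hr.2]
              refine le_trans (le_of_eq ?_)
                (mul_le_mul_right (aux_coeff_le f a hf hd r hr.1 hr.2 n) _)
              rw [← ENNReal.ofReal_mul (by positivity), ← ENNReal.ofReal_mul (by positivity)]
              congr 1
              ring
    _ = ∫⁻ r in Ioo (0 : ℝ) 1, ∑' n : ℕ,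
        ENNReal.ofReal (r ^ (n + 1) * (1 - r ^ 2) ^ (α + 1)) * auxM (deriv f) r := by
        rw [lintegral_tsum]
        intro n
        exact Measurable.aemeasurable (by fun_prop)
    _ ≤ ∫⁻ r in Ioo (0 : ℝ) 1,
        2 * (ENNReal.ofReal (r * (1 - r ^ 2) ^ α) * auxM (deriv f) r) := by
        refine setLIntegral_mono' measurableSet_Ioo fun r hr => ?_
        rw [ENNReal.tsum_mul_right, ← mul_assoc]
        exact mul_le_mul_left (aux_geom α r hr) _
    _ = 2 * ∫⁻ r in Ioo (0 : ℝ) 1,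
        ENNReal.ofReal (r * (1 - r ^ 2) ^ α) * auxM (deriv f) r := by
        rw [lintegral_const_mul]
        fun_prop
    _ ≤ _ := mul_le_mul_right (aux_polar α _ hg) _


/-- For `α > -1` there is `C = C(α) > 0` such that every
`f(z) = ∑ a_n z^n` in `𝒟¹_α` satisfies `∑_n |a_n| (n+1)^{-(1+α)} ≤ C ‖f‖_{𝒟¹_α}`. -/
theorem coefficients_D1a (α : ℝ) (hα : -1 < α) :
    ∃ C > 0, ∀ (f : ℂ → ℂ) (a : ℕ → ℂ),
      (∀ z ∈ ball (0 : ℂ) 1, HasSum (fun n : ℕ => a n * z ^ n) (f z)) →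
      DifferentiableOn ℂ f (ball (0 : ℂ) 1) → dirichletNorm 1 α f < ⊤ →
      (∑' n : ℕ, ENNReal.ofReal (‖a n‖ * ((n : ℝ) + 1) ^ (-(1 + α))))
        ≤ ENNReal.ofReal C * dirichletNorm 1 α f := by
  set c : ℝ := (1 / 2) * 8 ^ (-(α + 2)) with hc
  have hc0 : 0 < c := by positivity
  have hα1 : 0 < α + 1 := by linarith
  have hpi := Real.pi_pos
  set K : ℝ := c⁻¹ * 2 * Real.pi * (α + 1)⁻¹ with hK
  have hK0 : 0 < K := by positivity
  refine ⟨1 + K, by positivity, fun f a hf hd _ => ?_⟩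
  have hmain := aux_main α hα f a hf hd
  rw [← hc] at hmain
  set I : ℝ≥0∞ := ∫⁻ z in ball (0 : ℂ) 1, ENNReal.ofReal ((1 - ‖z‖ ^ 2) ^ α * ‖deriv f z‖) with hI
  set S : ℝ≥0∞ := ∑' n : ℕ, ENNReal.ofReal (‖a (n + 1)‖ * ((n : ℝ) + 1) ^ (-(1 + α))) with hS
  have hB : bergmanNorm 1 α (deriv f)
      = ENNReal.ofReal (α + 1) * ((ENNReal.ofReal Real.pi)⁻¹ * I) := by
    simp only [bergmanNorm, dA, Real.rpow_one, div_one, ENNReal.rpow_one, Measure.restrict_smul,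
      lintegral_smul_measure, smul_eq_mul, hI]
  have ha0 : a 0 = f 0 := by
    have h1 := hf 0 (by simp)
    have h2 := hasSum_single (f := fun n : ℕ => a n * (0 : ℂ) ^ n) 0 (by
      intro n hn; simp [hn])
    simpa using h2.unique h1
  have hSK : S ≤ ENNReal.ofReal K * bergmanNorm 1 α (deriv f) := by
    have e1 : ENNReal.ofReal K * bergmanNorm 1 α (deriv f) = ENNReal.ofReal c⁻¹ * (2 * I) := by
      rw [hB, ← ENNReal.ofReal_inv_of_pos hpi, ← mul_assoc, ← mul_assoc,
        ← ENNReal.ofReal_mul (by positivity), ← ENNReal.ofReal_mul (by positivity), ← mul_assoc,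
        show (2 : ℝ≥0∞) = ENNReal.ofReal 2 by simp, ← ENNReal.ofReal_mul (by positivity)]
      congr 2
      rw [hK]
      field_simp
    rw [e1]
    calc S = ENNReal.ofReal c⁻¹ * (ENNReal.ofReal c * S) := by
          rw [← mul_assoc, ← ENNReal.ofReal_mul (by positivity), inv_mul_cancel₀ hc0.ne']
          simp
      _ ≤ _ := mul_le_mul_right hmain _
  rw [tsum_eq_zero_add' ENNReal.summable]
  have hT : ∑' n : ℕ, ENNReal.ofReal (‖a (n + 1)‖ * (((n + 1 : ℕ) : ℝ) + 1) ^ (-(1 + α))) ≤ S := by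
    refine ENNReal.tsum_le_tsum fun n => ENNReal.ofReal_le_ofReal ?_
    refine mul_le_mul_of_nonneg_left ?_ (norm_nonneg _)
    apply Real.rpow_le_rpow_of_nonpos (by positivity) (by push_cast; linarith) (by linarith)
  have h0 : ENNReal.ofReal (‖a 0‖ * (((0 : ℕ) : ℝ) + 1) ^ (-(1 + α))) = ENNReal.ofReal ‖f 0‖ := by
    simp [ha0]
  rw [h0, dirichletNorm, mul_add]
  refine add_le_add ?_ (hT.trans (hSK.trans ?_))
  · calc _ = ENNReal.ofReal 1 * ENNReal.ofReal ‖f 0‖ := by simp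
      _ ≤ _ := by gcongr; linarith
  · gcongr; linarith
end

section
/- Let f(z) = ∑_{n=1}^∞ z^n / log(n+1) for z in the unit disc 𝔻. Then for every p > 1 the function f belongs to the weighted Bergman space A^p_{p−2}, while ∫_0^1 f(t) dt = +∞ (equivalently, ∑_{n=1}^∞ 1/((n+1) log(n+1)) = ∞). Consequently, for every p > 1 the Hilbert operator ℋ and the operator ℐ given by ℐ g(z) = ∫_0^1 g(t)/(1−tz) dt are not well defined on A^p_{p−2}. -/
open MeasureTheory Set Metric Filter Asymptotics
open scoped ENNReal

/-- The function `f(z) = ∑_{n≥1} z^n / log(n+1)` of Dostanić, Jevtić and Vukotić. -/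
noncomputable def fDJV : ℂ → ℂ := fun z => ∑' n : ℕ, z ^ (n + 1) / (Real.log ((n : ℝ) + 2) : ℂ)

lemma logpos (n : ℕ) : 1/2 ≤ Real.log ((n : ℝ) + 2) := by
  have h1 : Real.log 2 ≤ Real.log ((n : ℝ) + 2) :=
    Real.log_le_log (by norm_num) (by have := n.cast_nonneg (α := ℝ); linarith)
  have := Real.log_two_gt_d9
  linarith

lemma term_bound (n : ℕ) (z : ℂ) :
    ‖z ^ (n + 1) / (Real.log ((n : ℝ) + 2) : ℂ)‖ ≤ 2 * ‖z‖ ^ (n + 1) := by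
  have h := logpos n
  rw [norm_div, norm_pow, Complex.norm_real, Real.norm_of_nonneg (by linarith),
    div_le_iff₀ (by linarith)]
  have : 0 ≤ ‖z‖ ^ (n + 1) := by positivity
  nlinarith

lemma summ_geom {r : ℝ} (h0 : 0 ≤ r) (h1 : r < 1) : Summable fun n : ℕ => 2 * r ^ (n + 1) := by
  have := (summable_geometric_of_lt_one h0 h1).mul_left (2 * r)
  refine this.congr fun n => ?_
  ring

lemma fD_summable {z : ℂ} (hz : ‖z‖ < 1) :
    Summable fun n : ℕ => z ^ (n + 1) / (Real.log ((n : ℝ) + 2) : ℂ) :=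
  Summable.of_norm_bounded (summ_geom (norm_nonneg z) hz) fun n => term_bound n z

lemma fD_diff : DifferentiableOn ℂ fDJV (ball (0 : ℂ) 1) := by
  intro z hz
  rw [mem_ball_zero_iff] at hz
  obtain ⟨r, hr, hr1⟩ := exists_between hz
  have h0 : 0 ≤ r := (norm_nonneg z).trans hr.le
  have := Complex.differentiableOn_tsum_of_summable_norm (summ_geom h0 hr1)
    (F := fun (n : ℕ) (z : ℂ) => z ^ (n + 1) / (Real.log ((n : ℝ) + 2) : ℂ)) (U := ball 0 r)
    (fun n => by fun_prop) isOpen_ball (fun n w hw => by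
      refine (term_bound n w).trans ?_
      rw [mem_ball_zero_iff] at hw
      gcongr)
  exact ((this z (by simpa using hr)).differentiableAt
    (isOpen_ball.mem_nhds (by simpa using hr))).differentiableWithinAt

lemma not_summ : ¬ Summable (fun n : ℕ => 1 / (((n : ℝ) + 2) * Real.log ((n : ℝ) + 2))) := by
  rw [← summable_condensed_iff_of_nonneg]
  · intro h
    have h2 : Summable fun k : ℕ => (1/6 : ℝ) * (1 / ((k + 1 : ℕ) : ℝ)) := by
      refine Summable.of_nonneg_of_le (fun k => by positivity) (fun k => ?_) h
      have hk : (1:ℝ) ≤ 2 ^ k := one_le_pow₀ (by norm_num)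
      have hl := logpos (2 ^ k)
      have hu : Real.log (((2 ^ k : ℕ) : ℝ) + 2) ≤ 2 * (k + 1) := by
        have : Real.log (((2 ^ k : ℕ) : ℝ) + 2) ≤ Real.log (2 ^ (k + 2)) := by
          apply Real.log_le_log (by positivity)
          push_cast
          rw [pow_add]; linarith
        rw [Real.log_pow] at this
        have h3 := Real.log_two_lt_d9
        push_cast at this
        have : (0:ℝ) ≤ k := k.cast_nonneg
        push_cast
        nlinarith
      push_cast at hl hu ⊢
      rw [← mul_div_assoc, mul_one, mul_one_div, div_le_div_iff₀ (by positivity) (by positivity)]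
      have : ((2:ℝ)^k + 2) * Real.log (2 ^ k + 2) ≤ (3 * 2 ^ k) * (2 * (k + 1)) := by
        apply mul_le_mul _ hu (by linarith) (by positivity)
        linarith
      linarith
    rw [summable_mul_left_iff (by norm_num), summable_nat_add_iff (f := fun k : ℕ => 1 / (k : ℝ)) 1]
      at h2
    exact Real.not_summable_one_div_natCast h2
  · intro n
    have := logpos n
    positivity
  · intro m n _ hmn
    have := logpos m
    have hmn' : (m : ℝ) ≤ n := by exact_mod_cast hmn
    gcongr

lemma fD_real {t : ℝ} (h0 : 0 < t) (h1 : t < 1) :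
    ENNReal.ofReal ‖fDJV (t : ℂ)‖ =
      ∑' n : ℕ, ENNReal.ofReal (t ^ (n + 1) / Real.log ((n : ℝ) + 2)) := by
  have hs := fD_summable (z := (t : ℂ)) (by simpa [abs_of_pos h0] using h1)
  have hs' : Summable fun n : ℕ => t ^ (n + 1) / Real.log ((n : ℝ) + 2) := by
    rw [← Complex.summable_ofReal]
    refine hs.congr fun n => by push_cast; rfl
  have hnn : ∀ n : ℕ, 0 ≤ t ^ (n + 1) / Real.log ((n : ℝ) + 2) := fun n => by
    have := logpos n
    positivity
  rw [← ENNReal.ofReal_tsum_of_nonneg hnn hs']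
  congr 1
  have : fDJV (t : ℂ) = ((∑' n : ℕ, t ^ (n + 1) / Real.log ((n : ℝ) + 2) : ℝ) : ℂ) := by
    rw [Complex.ofReal_tsum]
    simp [fDJV]
  rw [this, Complex.norm_real, Real.norm_of_nonneg (tsum_nonneg hnn)]

lemma fD_int : (∫⁻ t in Ioo (0 : ℝ) 1, ENNReal.ofReal ‖fDJV (t : ℂ)‖) = ⊤ := by
  rw [setLIntegral_congr_fun measurableSet_Ioo (fun t ht => fD_real ht.1 ht.2),
    lintegral_tsum (fun n => by fun_prop)]
  have key : ∀ n : ℕ, ∫⁻ t in Ioo (0 : ℝ) 1, ENNReal.ofReal (t ^ (n + 1) / Real.log ((n : ℝ) + 2))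
      = ENNReal.ofReal (1 / (((n : ℝ) + 2) * Real.log ((n : ℝ) + 2))) := by
    intro n
    have hl := logpos n
    rw [← ofReal_integral_eq_lintegral_ofReal, ← integral_Ioc_eq_integral_Ioo,
      ← intervalIntegral.integral_of_le zero_le_one, intervalIntegral.integral_div, integral_pow]
    · congr 1
      push_cast
      field_simp
      simp
      ring
    · have : Continuous fun t : ℝ => t ^ (n + 1) / Real.log ((n : ℝ) + 2) := by fun_prop
      exact (this.integrableOn_Icc (a := 0) (b := 1)).mono_set Ioo_subset_Icc_self
    · filter_upwards [ae_restrict_mem measurableSet_Ioo] with t ht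
      have := ht.1
      simp only [Pi.zero_apply]
      positivity
  simp_rw [key]
  by_contra h
  apply not_summ
  have := ENNReal.summable_toReal h
  refine this.congr fun n => ?_
  rw [ENNReal.toReal_ofReal]
  have := logpos n
  positivity

lemma abel (z : ℂ) (hz : ‖z‖ ≤ 1) (c : ℕ → ℝ) (hc : ∀ n, 0 ≤ c n) (ha : Antitone c) (M : ℕ) :
    ‖(1 - z) * ∑ k ∈ Finset.range M, (c k : ℂ) * z ^ k + c M * z ^ M‖ + c M ≤ 2 * c 0 := by
  induction M with
  | zero => simp [abs_of_nonneg (hc 0)]; linarith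
  | succ M ih =>
    rw [Finset.sum_range_succ]
    have e : (1 - z) * (∑ k ∈ Finset.range M, (c k : ℂ) * z ^ k + c M * z ^ M)
        + c (M+1) * z ^ (M+1) = ((1 - z) * ∑ k ∈ Finset.range M, (c k : ℂ) * z ^ k + c M * z ^ M)
        + ((c (M+1) - c M : ℝ) : ℂ) * z ^ (M+1) := by push_cast; ring
    rw [e]
    have h1 := norm_add_le ((1 - z) * ∑ k ∈ Finset.range M, (c k : ℂ) * z ^ k + c M * z ^ M)
      (((c (M+1) - c M : ℝ) : ℂ) * z ^ (M+1))
    have h2 : ‖((c (M+1) - c M : ℝ) : ℂ) * z ^ (M+1)‖ ≤ c M - c (M+1) := by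
      have := ha (Nat.le_succ M)
      rw [norm_mul, Complex.norm_real, Real.norm_of_nonpos (by simpa using this), norm_pow]
      have : ‖z‖ ^ (M+1) ≤ 1 := pow_le_one₀ (norm_nonneg _) hz
      nlinarith
    linarith

lemma fD_bound1 {z : ℂ} (hz : ‖z‖ < 1) (N : ℕ) :
    ‖fDJV z‖ ≤ 2 * N + 2 / (‖1 - z‖ * Real.log (N + 2)) := by
  have hs := fD_summable hz
  have hz1 : 0 < ‖1 - z‖ := by
    rw [norm_pos_iff, sub_ne_zero]; rintro rfl; simp at hz
  have hl := logpos N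
  unfold fDJV
  rw [← hs.sum_add_tsum_nat_add N]
  refine (norm_add_le _ _).trans (add_le_add ?_ ?_)
  · refine (norm_sum_le _ _).trans ?_
    have : ∀ n ∈ Finset.range N, ‖z ^ (n + 1) / (Real.log ((n : ℝ) + 2) : ℂ)‖ ≤ 2 := fun n _ => by
      have := term_bound n z
      have h3 : ‖z‖ ^ (n+1) ≤ 1 := pow_le_one₀ (norm_nonneg _) hz.le
      linarith
    refine (Finset.sum_le_sum this).trans ?_
    simp [mul_comm]
  · have hs2 := ((summable_nat_add_iff N).2 hs).hasSum.tendsto_sum_nat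
    refine le_of_tendsto hs2.norm (Eventually.of_forall fun M => ?_)
    let c : ℕ → ℝ := fun k => 1 / Real.log (((k + N : ℕ) : ℝ) + 2)
    have hc : ∀ k, 0 ≤ c k := fun k => by
      have := logpos (k + N)
      simp only [c]; positivity
    have ha : Antitone c := fun a b hab => by
      have := logpos (a + N)
      have hab' : (a : ℝ) ≤ b := by exact_mod_cast hab
      simp only [c]
      push_cast at this ⊢
      apply one_div_le_one_div_of_le (by linarith)
      apply Real.log_le_log <;> [positivity; linarith]
    have h := abel z hz.le c hc ha M
    have e : ∑ i ∈ Finset.range M, z ^ (i + N + 1) / (Real.log (((i + N : ℕ) : ℝ) + 2) : ℂ)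
        = z ^ (N + 1) * ∑ k ∈ Finset.range M, (c k : ℂ) * z ^ k := by
      rw [Finset.mul_sum]
      refine Finset.sum_congr rfl fun i _ => ?_
      simp only [c]; push_cast; ring
    rw [e, norm_mul, norm_pow]
    have h5 : ‖c M * z ^ M‖ ≤ c M := by
      rw [norm_mul, Complex.norm_real, Real.norm_of_nonneg (hc M), norm_pow]
      have : ‖z‖ ^ M ≤ 1 := pow_le_one₀ (norm_nonneg _) hz.le
      have := hc M
      nlinarith
    set S := ∑ k ∈ Finset.range M, (c k : ℂ) * z ^ k
    have h6 : ‖(1 - z) * S‖ ≤ 2 * c 0 := by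
      have := norm_sub_le ((1 - z) * S + c M * z ^ M) (c M * z ^ M)
      rw [add_sub_cancel_right] at this
      linarith
    rw [norm_mul] at h6
    have h7 : ‖z‖ ^ (N+1) ≤ 1 := pow_le_one₀ (norm_nonneg _) hz.le
    have h8 : c 0 = 1 / Real.log (N + 2) := by simp [c]
    rw [h8] at h6
    calc ‖z‖ ^ (N+1) * ‖S‖ ≤ ‖S‖ := mul_le_of_le_one_left (norm_nonneg _) h7
      _ ≤ _ := by
        rw [← div_div, le_div_iff₀ (by linarith), le_div_iff₀ hz1]
        have := mul_le_mul_of_nonneg_right h6 (by linarith : 0 ≤ Real.log ((N:ℝ) + 2))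
        have e2 : 2 * (1 / Real.log ((N:ℝ) + 2)) * Real.log (N + 2) = 2 := by
          field_simp
        linarith

noncomputable def gD (x : ℝ) : ℝ := 1 / (x * Real.log (4 / x))

lemma log4 {x : ℝ} (h0 : 0 < x) (h1 : x ≤ 1) : 1 < Real.log (4 / x) := by
  have h2 : (4:ℝ) ≤ 4 / x := by rw [le_div_iff₀ h0]; linarith
  have h3 := Real.log_le_log (by norm_num) h2
  have h4 : Real.log 4 = 2 * Real.log 2 := by
    rw [show (4:ℝ) = 2 ^ 2 by norm_num, Real.log_pow]; norm_num
  have := Real.log_two_gt_d9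
  linarith

lemma fD_bound2 {z : ℂ} (hz : ‖z‖ < 1) {m : ℝ} (h0 : 0 < m) (h1 : m ≤ 1) (hm : m ≤ ‖1 - z‖) :
    ‖fDJV z‖ ≤ 24 * gD m := by
  have hL := log4 h0 h1
  set q := Real.sqrt m with hq
  have hq0 : 0 < q := Real.sqrt_pos.2 h0
  have hq1 : q ≤ 1 := Real.sqrt_le_one.2 h1
  have hqq : q * q = m := Real.mul_self_sqrt h0.le
  have hqi : 1 ≤ 1 / q := by rw [le_div_iff₀ hq0]; linarith
  set N := ⌈1 / q⌉₊ with hN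
  have hN1 : 1 / q ≤ N := Nat.le_ceil _
  have hN2 : (N : ℝ) ≤ 2 * (1 / q) := by
    have := Nat.ceil_lt_add_one (zero_le_one.trans hqi)
    linarith
  have hb := fD_bound1 hz N
  have hl := logpos N
  have e4 : Real.log (4 / m) = 2 * Real.log (2 / q) := by
    rw [← hqq, show 4 / (q * q) = (2 / q) ^ 2 by field_simp; norm_num, Real.log_pow]; norm_num
  have A : Real.log (4 / m) ≤ 4 / q := by
    have := Real.log_le_sub_one_of_pos (show 0 < 2 / q by positivity)
    rw [e4, show 4 / q = 2 * (2 / q) by ring]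
    linarith
  have B : Real.log (4 / m) ≤ 4 * Real.log (N + 2) := by
    have h3 : Real.log (2 / q) ≤ Real.log ((N + 2) ^ 2) := by
      apply Real.log_le_log (by positivity)
      have : 2 / q = 2 * (1 / q) := by ring
      nlinarith
    rw [Real.log_pow] at h3
    rw [e4]; push_cast at h3; linarith
  have C1 : 1 / q ≤ 4 * gD m := by
    unfold gD
    rw [mul_one_div, div_le_div_iff₀ hq0 (by positivity)]
    rw [le_div_iff₀ hq0] at A
    nlinarith
  have hm1 : 0 < ‖1 - z‖ := h0.trans_le hm
  have hl0 : 0 < Real.log (N + 2) := by linarith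
  have C2 : 2 / (‖1 - z‖ * Real.log (N + 2)) ≤ 8 * gD m := by
    unfold gD
    rw [mul_one_div, div_le_div_iff₀ (by positivity) (by positivity)]
    have : m * Real.log (4 / m) ≤ ‖1 - z‖ * (4 * Real.log (N + 2)) :=
      mul_le_mul hm B (by linarith) (norm_nonneg _)
    linarith
  linarith

noncomputable def phiD (p x : ℝ) : ℝ := x ^ (p - 1) * gD x ^ p

lemma gD_nonneg {x : ℝ} (h0 : 0 < x) (h1 : x ≤ 1) : 0 ≤ gD x := by
  have := log4 h0 h1
  unfold gD; positivity

lemma phiD_eq {p x : ℝ} (h0 : 0 < x) (h1 : x ≤ 1) :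
    phiD p x = x⁻¹ * Real.log (4 / x) ^ (-p) := by
  have hL := log4 h0 h1
  unfold phiD gD
  rw [one_div, Real.inv_rpow (by positivity), Real.mul_rpow h0.le (by linarith), mul_inv,
    Real.rpow_neg (by linarith), ← mul_assoc, ← Real.rpow_neg h0.le, ← Real.rpow_add h0,
    show p - 1 + -p = -1 by ring, Real.rpow_neg_one]

lemma phi_int {p : ℝ} (hp : 1 < p) : IntegrableOn (phiD p) (Ioc 0 1) := by
  have h : IntegrableOn (fun x : ℝ => (p - 1) * (x⁻¹ * Real.log (4 / x) ^ (-p))) (Ioc 0 1) := by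
    apply intervalIntegral.integrableOn_deriv_of_nonneg
      (g := fun x : ℝ => Real.log (4 / x) ^ (1 - p))
    · intro x hx
      rcases hx.1.eq_or_lt with rfl | h0
      · have h1 : Tendsto (fun x : ℝ => Real.log (4 / x) ^ (-(p - 1))) (nhdsWithin 0 (Ioi 0)) (nhds 0) := by
          refine (tendsto_rpow_neg_atTop (by linarith : 0 < p - 1)).comp ?_
          refine Real.tendsto_log_atTop.comp ?_
          show Tendsto (fun x : ℝ => 4 * x⁻¹) _ _
          exact tendsto_inv_nhdsGT_zero.const_mul_atTop (by norm_num)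
        have h2 : ContinuousWithinAt (fun x : ℝ => Real.log (4 / x) ^ (1 - p)) (Ioi 0) 0 := by
          unfold ContinuousWithinAt
          simp only [div_zero, Real.log_zero]
          rw [Real.zero_rpow (by linarith)]
          simpa using h1
        exact (continuousWithinAt_insert_self.2 h2).mono fun y hy => by
          rcases hy.1.eq_or_lt with h | h
          · exact Or.inl h.symm
          · exact Or.inr h
      · have hL := log4 h0 hx.2
        apply ContinuousAt.continuousWithinAt
        refine ContinuousAt.rpow_const ?_ (Or.inl (by linarith))
        refine ContinuousAt.log ?_ (by positivity)
        exact continuousAt_const.div continuousAt_id h0.ne'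
    · intro x hx
      have h0 := hx.1
      have hL := log4 h0 hx.2.le
      have d1 : HasDerivAt (fun x : ℝ => 4 / x) (-4 / x ^ 2) x := by
        have := (hasDerivAt_inv h0.ne').const_mul 4
        exact this.congr_deriv (by ring)
      have d2 := (d1.log (by positivity)).rpow_const (p := 1 - p) (Or.inl (by linarith))
      convert d2 using 1
      rw [show 1 - p - 1 = -p by ring]
      field_simp
      ring
    · intro x hx
      have h0 := hx.1
      have hL := log4 h0 hx.2.le
      have : 0 < p - 1 := by linarith
      positivity
  have h2 := h.const_mul (p - 1)⁻¹
  refine IntegrableOn.congr_fun h2 (fun x hx => ?_) measurableSet_Ioc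
  have : p - 1 ≠ 0 := by linarith
  rw [phiD_eq hx.1 hx.2, inv_mul_cancel_left₀ this]

noncomputable def FD (p : ℝ) : ℝ → ℝ := (Ioc (0:ℝ) 1).indicator (phiD p)

lemma FD_int {p : ℝ} (hp : 1 < p) : Integrable (FD p) :=
  (integrable_indicator_iff measurableSet_Ioc).2 (phi_int hp)

lemma FD_nonneg (p x : ℝ) : 0 ≤ FD p x := by
  apply indicator_nonneg
  intro y hy
  have := gD_nonneg hy.1 hy.2
  have := hy.1
  unfold phiD; positivity

lemma inner2 {p a : ℝ} (hp : 1 < p) (ha : 0 ≤ a) :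
    ∫⁻ r in Ioo (1 - a) 1, ENNReal.ofReal ((1 - r) ^ (p - 2)) = ENNReal.ofReal (a ^ (p - 1) / (p - 1)) := by
  have hi : IntervalIntegrable (fun r : ℝ => (1 - r) ^ (p - 2)) volume (1 - a) 1 := by
    have := (intervalIntegral.intervalIntegrable_rpow' (r := p - 2) (a := a) (b := 0) (by linarith)).comp_sub_left 1
    simpa using this
  have hi2 := (intervalIntegrable_iff_integrableOn_Ioo_of_le (by linarith)).1 hi
  rw [← ofReal_integral_eq_lintegral_ofReal hi2]
  · congr 1
    rw [← integral_Ioc_eq_integral_Ioo, ← intervalIntegral.integral_of_le (by linarith),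
      intervalIntegral.integral_comp_sub_left (fun x => x ^ (p - 2)) 1]
    rw [integral_rpow (Or.inl (by linarith))]
    rw [show p - 2 + 1 = p - 1 by ring, sub_self, Real.zero_rpow (by linarith)]
    simp
  · filter_upwards [ae_restrict_mem measurableSet_Ioo] with r hr
    have : 0 ≤ 1 - r := by linarith [hr.2]
    simp only [Pi.zero_apply]; positivity

noncomputable def E1 (p : ℝ) (q : ℝ × ℝ) : ℝ≥0∞ :=
  if |q.2| ≤ 1 - q.1 then ENNReal.ofReal ((1 - q.1) ^ (p - 2) * gD (1 - q.1) ^ p) else 0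

noncomputable def E2 (p : ℝ) (q : ℝ × ℝ) : ℝ≥0∞ :=
  if 1 - q.1 < |q.2| then ENNReal.ofReal ((1 - q.1) ^ (p - 2)) * ENNReal.ofReal (gD (|q.2| / Real.pi) ^ p) else 0

lemma meas_gD : Measurable gD := by
  unfold gD; fun_prop

lemma meas_E1 (p : ℝ) : Measurable (E1 p) := by
  have := meas_gD
  refine Measurable.ite (measurableSet_le (by fun_prop) (by fun_prop)) (by fun_prop) (by fun_prop)

lemma meas_E2 (p : ℝ) : Measurable (E2 p) := by
  have := meas_gD
  refine Measurable.ite (measurableSet_lt (by fun_prop) (by fun_prop)) (by fun_prop) (by fun_prop)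

lemma int_E1 {p : ℝ} (hp : 1 < p) :
    ∫⁻ q in Ioo (0:ℝ) 1 ×ˢ Ioo (-Real.pi) Real.pi, E1 p q < ⊤ := by
  rw [Measure.volume_eq_prod, ← Measure.prod_restrict, lintegral_prod _ (meas_E1 p).aemeasurable]
  have key : ∀ r ∈ Ioo (0:ℝ) 1, ∫⁻ θ in Ioo (-Real.pi) Real.pi, E1 p (r, θ) ≤
      ENNReal.ofReal (2 * FD p (1 - r)) := by
    intro r hr
    have hs : 0 < 1 - r := by linarith [hr.2]
    have hs1 : 1 - r ≤ 1 := by linarith [hr.1]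
    calc _ ≤ ∫⁻ θ, E1 p (r, θ) := setLIntegral_le_lintegral _ _
      _ = ∫⁻ θ, (Icc (-(1-r)) (1-r)).indicator
          (fun _ => ENNReal.ofReal ((1 - r) ^ (p - 2) * gD (1 - r) ^ p)) θ := by
        refine lintegral_congr fun θ => ?_
        simp only [E1, indicator, mem_Icc, abs_le]
      _ = ENNReal.ofReal (2 * FD p (1 - r)) := by
        rw [lintegral_indicator_const measurableSet_Icc, Real.volume_Icc,
          ← ENNReal.ofReal_mul' (by linarith)]
        congr 1
        rw [FD, indicator_of_mem (show 1 - r ∈ Ioc (0:ℝ) 1 from ⟨hs, hs1⟩), phiD, show p - 1 = (p - 2) + 1 by ring,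
          Real.rpow_add_one hs.ne']
        ring
  refine (setLIntegral_mono' measurableSet_Ioo key).trans_lt ?_
  refine (setLIntegral_le_lintegral _ _).trans_lt ?_
  exact (((FD_int hp).comp_sub_left 1).const_mul 2).lintegral_lt_top

lemma int_E2 {p : ℝ} (hp : 1 < p) :
    ∫⁻ q in Ioo (0:ℝ) 1 ×ˢ Ioo (-Real.pi) Real.pi, E2 p q < ⊤ := by
  rw [Measure.volume_eq_prod, ← Measure.prod_restrict, lintegral_prod_symm _ (meas_E2 p).aemeasurable]
  have hpi := Real.pi_pos
  have key : ∀ θ ∈ Ioo (-Real.pi) Real.pi, ∫⁻ r in Ioo (0:ℝ) 1, E2 p (r, θ) ≤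
      ENNReal.ofReal (Real.pi ^ (p - 1) / (p - 1) * (FD p (θ / Real.pi) + FD p (-θ / Real.pi))) := by
    intro θ hθ
    have hp1 : 0 < p - 1 := by linarith
    rcases eq_or_ne θ 0 with rfl | h0
    · refine le_of_eq_of_le (b := 0) ?_ (zero_le)
      rw [setLIntegral_congr_fun (g := fun _ => 0) measurableSet_Ioo]
      · simp
      · intro r hr
        have : ¬ (1 - r < 0) := by linarith [hr.2]
        simp [E2, this]
    have hab : 0 < |θ| := abs_pos.2 h0
    have hx0 : 0 < |θ| / Real.pi := by positivity
    have hx1 : |θ| / Real.pi ≤ 1 := by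
      rw [div_le_one hpi, abs_le]; exact ⟨hθ.1.le, hθ.2.le⟩
    calc _ ≤ ∫⁻ r in Ioo (0:ℝ) 1, (Ioo (1 - |θ|) 1).indicator (fun r => ENNReal.ofReal ((1 - r) ^ (p - 2))) r
              * ENNReal.ofReal (gD (|θ| / Real.pi) ^ p) := by
          refine setLIntegral_mono' measurableSet_Ioo fun r hr => ?_
          unfold E2
          split_ifs with h
          · rw [indicator_of_mem]
            exact ⟨by simp only at h; linarith, hr.2⟩
          · exact zero_le
      _ = (∫⁻ r in Ioo (0:ℝ) 1, (Ioo (1 - |θ|) 1).indicator (fun r => ENNReal.ofReal ((1 - r) ^ (p - 2))) r)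
              * ENNReal.ofReal (gD (|θ| / Real.pi) ^ p) := 
          lintegral_mul_const' _ _ ENNReal.ofReal_ne_top
      _ ≤ ENNReal.ofReal (|θ| ^ (p - 1) / (p - 1)) * ENNReal.ofReal (gD (|θ| / Real.pi) ^ p) := by
          gcongr
          refine (setLIntegral_le_lintegral _ _).trans ?_
          rw [lintegral_indicator measurableSet_Ioo, inner2 hp hab.le]
      _ = ENNReal.ofReal (Real.pi ^ (p - 1) / (p - 1) * FD p (|θ| / Real.pi)) := by
          rw [← ENNReal.ofReal_mul (by positivity)]
          congr 1
          rw [FD, indicator_of_mem (show |θ| / Real.pi ∈ Ioc (0:ℝ) 1 from ⟨hx0, hx1⟩), phiD, Real.div_rpow hab.le hpi.le]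
          field_simp
      _ ≤ _ := by
          gcongr
          have := FD_nonneg p (θ / Real.pi)
          have := FD_nonneg p (-θ / Real.pi)
          rcases abs_choice θ with h | h <;> rw [h] <;> linarith
  refine (setLIntegral_mono' measurableSet_Ioo key).trans_lt ?_
  refine (setLIntegral_le_lintegral _ _).trans_lt ?_
  have i1 := (FD_int hp).comp_div hpi.ne'
  have i2 := i1.comp_neg
  exact ((i1.add i2).const_mul _).lintegral_lt_top

lemma theta_bound {r θ : ℝ} (hr : r ∈ Ioo (0:ℝ) 1) (hθ : θ ∈ Ioo (-Real.pi) Real.pi) :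
    |θ| / Real.pi ≤ ‖1 - (r : ℂ) * Complex.exp (Complex.I * θ)‖ := by
  set w := Complex.exp (Complex.I * θ) with hw
  have hwn : ‖w‖ = 1 := by rw [hw, mul_comm]; exact Complex.norm_exp_ofReal_mul_I θ
  have h1 := Complex.norm_exp_I_mul_ofReal_sub_one θ
  rw [← hw, Real.norm_eq_abs, abs_mul, abs_two] at h1
  have h2 : 2 / Real.pi * |θ / 2| ≤ |Real.sin (θ / 2)| := by
    apply Real.mul_abs_le_abs_sin
    rw [abs_div, abs_two]
    have : |θ| ≤ Real.pi := abs_le.2 ⟨hθ.1.le, hθ.2.le⟩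
    linarith
  rw [abs_div, abs_two, show 2 / Real.pi * (|θ| / 2) = |θ| / Real.pi by ring] at h2
  have h3 : ‖w - r * w‖ = 1 - r := by
    rw [show w - r * w = ((1 - r : ℝ) : ℂ) * w by push_cast; ring, norm_mul, hwn, Complex.norm_real,
      Real.norm_of_nonneg (by linarith [hr.2]), mul_one]
  have h4 : 1 - r ≤ ‖1 - r * w‖ := by
    have := norm_sub_norm_le 1 (r * w)
    rw [norm_mul, hwn, Complex.norm_real, Real.norm_of_nonneg hr.1.le] at this
    simpa using this
  have h5 : ‖w - 1‖ ≤ ‖w - r * w‖ + ‖1 - r * w‖ := by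
    rw [show w - 1 = (w - r * w) - (1 - r * w) by ring]
    exact norm_sub_le _ _
  linarith

lemma pointwise {p : ℝ} (hp : 1 < p) {q : ℝ × ℝ} (hr : q.1 ∈ Ioo (0:ℝ) 1)
    (hθ : q.2 ∈ Ioo (-Real.pi) Real.pi) :
    ENNReal.ofReal ((1 - q.1 ^ 2) ^ (p - 2) * ‖fDJV ((q.1 : ℂ) * Complex.exp (Complex.I * q.2))‖ ^ p)
      ≤ ENNReal.ofReal (2 ^ p * 24 ^ p) * (E1 p q + E2 p q) := by
  obtain ⟨r, θ⟩ := q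
  simp only at hr hθ ⊢
  have hpi := Real.pi_pos
  have hs : 0 < 1 - r := by linarith [hr.2]
  have hs1 : 1 - r ≤ 1 := by linarith [hr.1]
  set z := (r : ℂ) * Complex.exp (Complex.I * θ) with hz
  have hzn : ‖z‖ = r := by
    rw [hz, norm_mul, mul_comm Complex.I, Complex.norm_exp_ofReal_mul_I, Complex.norm_real,
      Real.norm_of_nonneg hr.1.le, mul_one]
  have hz1 : ‖z‖ < 1 := by rw [hzn]; exact hr.2
  have hw : (1 - r ^ 2) ^ (p - 2) ≤ 2 ^ p * (1 - r) ^ (p - 2) := by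
    rw [show 1 - r ^ 2 = (1 + r) * (1 - r) by ring, Real.mul_rpow (by linarith [hr.1]) hs.le]
    gcongr
    calc (1 + r) ^ (p - 2) ≤ (1 + r) ^ p :=
          Real.rpow_le_rpow_of_exponent_le (by linarith [hr.1]) (by linarith)
      _ ≤ 2 ^ p := Real.rpow_le_rpow (by linarith [hr.1]) (by linarith [hr.2]) (by linarith)
  have main : ∀ m, 0 < m → m ≤ 1 → m ≤ ‖1 - z‖ →
      ENNReal.ofReal ((1 - r ^ 2) ^ (p - 2) * ‖fDJV z‖ ^ p) ≤
      ENNReal.ofReal (2 ^ p * 24 ^ p) * ENNReal.ofReal ((1 - r) ^ (p - 2) * gD m ^ p) := by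
    intro m h0 h1 hm
    rw [← ENNReal.ofReal_mul (by positivity)]
    apply ENNReal.ofReal_le_ofReal
    have hg := gD_nonneg h0 h1
    have h3 : ‖fDJV z‖ ^ p ≤ 24 ^ p * gD m ^ p := by
      rw [← Real.mul_rpow (by norm_num) hg]
      exact Real.rpow_le_rpow (norm_nonneg _) (fD_bound2 hz1 h0 h1 hm) (by linarith)
    calc _ ≤ (2 ^ p * (1 - r) ^ (p - 2)) * (24 ^ p * gD m ^ p) := by gcongr
      _ = _ := by ring
  by_cases h : |θ| ≤ 1 - r
  · refine (main (1 - r) hs hs1 ?_).trans ?_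
    · have := norm_sub_norm_le 1 z
      rw [hzn] at this
      simpa using this
    · gcongr
      rw [E1, if_pos h]
      exact le_self_add
  · push Not at h
    refine (main (|θ| / Real.pi) (div_pos (hs.trans h) hpi) ?_ (theta_bound hr hθ)).trans ?_
    · rw [div_le_one hpi, abs_le]; exact ⟨hθ.1.le, hθ.2.le⟩
    · gcongr
      rw [E2, if_pos h, ← ENNReal.ofReal_mul (by positivity)]
      exact le_add_self

lemma berg {p : ℝ} (hp : 1 < p) : bergmanNorm p (p - 2) fDJV < ⊤ := by
  unfold bergmanNorm
  refine ENNReal.rpow_lt_top_of_nonneg (by positivity) (ENNReal.mul_lt_top ENNReal.ofReal_lt_top ?_).ne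
  rw [dA, Measure.restrict_smul, lintegral_smul_measure]
  refine ENNReal.mul_lt_top (ENNReal.inv_lt_top.2 (by simpa using Real.pi_pos)) ?_
  rw [← lintegral_indicator measurableSet_ball, ← Complex.lintegral_comp_polarCoord_symm]
  have hmeas : MeasurableSet (Ioo (0:ℝ) 1 ×ˢ Ioo (-Real.pi) Real.pi) :=
    measurableSet_Ioo.prod measurableSet_Ioo
  calc _ ≤ ∫⁻ q in polarCoord.target, (Ioo (0:ℝ) 1 ×ˢ Ioo (-Real.pi) Real.pi).indicator
          (fun q => ENNReal.ofReal (2 ^ p * 24 ^ p) * (E1 p q + E2 p q)) q := by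
        refine setLIntegral_mono' polarCoord.open_target.measurableSet fun q hq => ?_
        rw [polarCoord_target] at hq
        have e : Complex.polarCoord.symm q = (q.1 : ℂ) * Complex.exp (Complex.I * q.2) := by
          rw [Complex.polarCoord_symm_apply, mul_comm Complex.I, Complex.exp_mul_I]
          push_cast; rfl
        have hn : ‖Complex.polarCoord.symm q‖ = q.1 := by
          rw [Complex.norm_polarCoord_symm, abs_of_pos hq.1]
        by_cases h : q.1 < 1
        · rw [indicator_of_mem (by rw [mem_ball_zero_iff, hn]; exact h), hn,
            indicator_of_mem (show q ∈ Ioo (0:ℝ) 1 ×ˢ Ioo (-Real.pi) Real.pi from ⟨⟨hq.1, h⟩, hq.2⟩), e]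
          refine le_trans ?_ (pointwise hp ⟨hq.1, h⟩ hq.2)
          rw [smul_eq_mul]
          refine mul_le_of_le_one_left (zero_le) ?_
          simpa using h.le
        · rw [indicator_of_notMem (by rw [mem_ball_zero_iff, hn]; exact h)]
          simp
    _ ≤ ∫⁻ q, (Ioo (0:ℝ) 1 ×ˢ Ioo (-Real.pi) Real.pi).indicator
          (fun q => ENNReal.ofReal (2 ^ p * 24 ^ p) * (E1 p q + E2 p q)) q := setLIntegral_le_lintegral _ _
    _ = ENNReal.ofReal (2 ^ p * 24 ^ p) * ((∫⁻ q in Ioo (0:ℝ) 1 ×ˢ Ioo (-Real.pi) Real.pi, E1 p q)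
          + ∫⁻ q in Ioo (0:ℝ) 1 ×ˢ Ioo (-Real.pi) Real.pi, E2 p q) := by
        rw [lintegral_indicator hmeas, lintegral_const_mul' _ _ ENNReal.ofReal_ne_top,
          lintegral_add_left (meas_E1 p)]
    _ < ⊤ := ENNReal.mul_lt_top ENNReal.ofReal_lt_top (ENNReal.add_lt_top.2 ⟨int_E1 hp, int_E2 hp⟩)

/-- The function `f(z) = ∑_{n≥1} z^n / log(n+1)` belongs to `A^p_{p-2}`
for every `p > 1`, while `∫_0^1 f(t) dt = +∞` (equivalently
`∑_{n≥1} 1/((n+1) log(n+1)) = ∞`); hence the Hilbert operator `ℋ` and the operator `ℐ`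
are not well defined on `A^p_{p-2}` for any `p > 1`. -/
theorem fDJV_in_Apa_but_integral_infinite :
    (∀ p : ℝ, 1 < p →
      DifferentiableOn ℂ fDJV (ball (0 : ℂ) 1) ∧ bergmanNorm p (p - 2) fDJV < ⊤) ∧
    (∫⁻ t in Ioo (0 : ℝ) 1, ENNReal.ofReal ‖fDJV (t : ℂ)‖) = ⊤ ∧
    ¬ Summable (fun n : ℕ => 1 / (((n : ℝ) + 2) * Real.log ((n : ℝ) + 2))) := by
  exact ⟨fun p hp => ⟨fD_diff, berg hp⟩, fD_int, not_summ⟩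
end
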